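/- Let ψ : E → F be a Borel measurable map between Polish spaces, let μ be a Borel probability measure on E, and let ν' be a Borel probability measure on F that is absolutely continuous with respect to the pushforward ψ_*μ, with density f = dν'/d(ψ_*μ). Then the measure ν on E defined by dν := (f ∘ ψ) dμ is a Borel probability measure, its pushforward satisfies ψ_*ν = ν', and the relative entropies coincide: H(ν|μ) = H(ν'|ψ_*μ). -/

import Mathlib

/-! Write `ψ_*` for the pushforward along `ψ`. The change of variables formula gives
`ψ_*((f ∘ ψ) · μ) = f · ψ_*μ`. Moreover the density of `(f ∘ ψ) · μ` with respect to `μ` is, by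
construction, the density of its pushforward with respect to `ψ_*μ` composed with `ψ`. The
log-likelihood ratios on `E` and `F` therefore correspond under `ψ`, and a second change of
variables identifies the two entropies. -/

open MeasureTheory
open scoped ENNReal

/-- The squared (second-order) Wasserstein distance: infimum over all couplings `π` of
`(ν, μ)` of `∫ d(x,y)² dπ`. -/
noncomputable def W2sq {E : Type*} [MeasurableSpace E] [PseudoMetricSpace E]
    (ν μ : Measure E) : ℝ≥0∞ :=
  ⨅ (π : Measure (E × E)) (_ : π.map Prod.fst = ν) (_ : π.map Prod.snd = μ),
    ∫⁻ p, ENNReal.ofReal (dist p.1 p.2 ^ 2) ∂π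

open Classical in
/-- Relative entropy (Kullback-Leibler divergence): `∫ (dν/dμ) log (dν/dμ) dμ` if `ν ≪ μ`
(where a non-integrable log-likelihood ratio yields `∞`), and `∞` otherwise. -/
noncomputable def relEntropy {E : Type*} [MeasurableSpace E] (ν μ : Measure E) : ℝ≥0∞ :=
  if ν ≪ μ ∧ Integrable (llr ν μ) ν then ENNReal.ofReal (∫ x, llr ν μ x ∂ν) else ∞

/-- A probability measure `μ` satisfies Talagrand's quadratic transportation inequality
`T2(C)` if `W₂²(ν, μ) ≤ C · H(ν | μ)` for every Borel probability measure `ν`. -/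
def SatisfiesT2 {E : Type*} [MeasurableSpace E] [PseudoMetricSpace E]
    (μ : Measure E) (C : ℝ) : Prop :=
  ∀ ν : Measure E, IsProbabilityMeasure ν → W2sq ν μ ≤ ENNReal.ofReal C * relEntropy ν μ

section PullbackDensity

variable {E F : Type*} [MeasurableSpace E] [MeasurableSpace F] {μ : Measure E} {ψ : E → F}
  {f : F → ℝ≥0∞}

theorem map_withDensity_comp (hψ : AEMeasurable ψ μ) (hf : AEMeasurable f (μ.map ψ)) :
    (μ.withDensity (f ∘ ψ)).map ψ = (μ.map ψ).withDensity f := by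
  ext s hs
  have hψs : NullMeasurableSet (ψ ⁻¹' s) μ := hψ.nullMeasurableSet_preimage hs
  have hψ_map : (μ.map ψ).restrict s = (μ.restrict (ψ ⁻¹' s)).map ψ :=
    Measure.restrict_map_of_aemeasurable hψ hs
  calc (μ.withDensity (f ∘ ψ)).map ψ s
      = μ.withDensity (f ∘ ψ) (ψ ⁻¹' s) :=
        Measure.map_apply_of_aemeasurable (hψ.mono_ac (withDensity_absolutelyContinuous _ _)) hs
    _ = ∫⁻ x in ψ ⁻¹' s, f (ψ x) ∂μ := withDensity_apply₀ _ hψs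
    _ = ∫⁻ y in s, f y ∂(μ.map ψ) := by
        rw [hψ_map, lintegral_map' (hψ_map ▸ hf.restrict) hψ.restrict]
    _ = (μ.map ψ).withDensity f s := (withDensity_apply _ hs).symm

theorem rnDeriv_withDensity_comp_ae_eq [SigmaFinite (μ.map ψ)] (hψ : AEMeasurable ψ μ)
    (hf : AEMeasurable f (μ.map ψ)) :
    (μ.withDensity (f ∘ ψ)).rnDeriv μ =ᵐ[μ]
      ((μ.map ψ).withDensity f).rnDeriv (μ.map ψ) ∘ ψ := by
  have : SigmaFinite μ := SigmaFinite.of_map μ hψ inferInstance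
  exact (Measure.rnDeriv_withDensity₀ μ (hf.comp_aemeasurable hψ)).trans
    (ae_eq_comp hψ (Measure.rnDeriv_withDensity₀ (μ.map ψ) hf)).symm

theorem llr_withDensity_comp_ae_eq [SigmaFinite (μ.map ψ)] (hψ : AEMeasurable ψ μ)
    (hf : AEMeasurable f (μ.map ψ)) :
    llr (μ.withDensity (f ∘ ψ)) μ =ᵐ[μ] llr ((μ.map ψ).withDensity f) (μ.map ψ) ∘ ψ :=
  (rnDeriv_withDensity_comp_ae_eq hψ hf).fun_comp fun r => Real.log r.toReal

theorem relEntropy_eq_of_llr_ae_eq_comp {ν : Measure E} {μ' : Measure F} (hψ : AEMeasurable ψ ν)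
    (hνμ : ν ≪ μ) (hνμ' : ν.map ψ ≪ μ') (hllr : llr ν μ =ᵐ[ν] llr (ν.map ψ) μ' ∘ ψ) :
    relEntropy ν μ = relEntropy (ν.map ψ) μ' := by
  have hmeas : AEStronglyMeasurable (llr (ν.map ψ) μ') (ν.map ψ) :=
    (stronglyMeasurable_llr _ _).aestronglyMeasurable
  have h_integrable : Integrable (llr ν μ) ν ↔ Integrable (llr (ν.map ψ) μ') (ν.map ψ) :=
    (integrable_congr hllr).trans (integrable_map_measure hmeas hψ).symm
  have h_integral : ∫ x, llr ν μ x ∂ν = ∫ y, llr (ν.map ψ) μ' y ∂(ν.map ψ) :=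
    (integral_congr_ae hllr).trans (integral_map hψ hmeas).symm
  unfold relEntropy
  rw [h_integral]
  classical exact if_congr (and_congr (iff_of_true hνμ hνμ') h_integrable) rfl rfl

theorem relEntropy_withDensity_comp [SigmaFinite (μ.map ψ)] (hψ : AEMeasurable ψ μ)
    (hf : AEMeasurable f (μ.map ψ)) :
    relEntropy (μ.withDensity (f ∘ ψ)) μ = relEntropy ((μ.map ψ).withDensity f) (μ.map ψ) := by
  have hac : μ.withDensity (f ∘ ψ) ≪ μ := withDensity_absolutelyContinuous _ _
  have hmap := map_withDensity_comp hψ hf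
  rw [← hmap]
  refine relEntropy_eq_of_llr_ae_eq_comp (hψ.mono_ac hac) hac ?_ ?_
  · exact hmap ▸ withDensity_absolutelyContinuous _ _
  · exact hmap ▸ hac.ae_eq (llr_withDensity_comp_ae_eq hψ hf)

theorem pullback_density_probability_map_relEntropy_general [SigmaFinite (μ.map ψ)]
    (hψ : AEMeasurable ψ μ) (ν' : Measure F) [IsProbabilityMeasure ν'] (habs : ν' ≪ μ.map ψ) :
    IsProbabilityMeasure (μ.withDensity (fun x => ν'.rnDeriv (μ.map ψ) (ψ x))) ∧
    (μ.withDensity (fun x => ν'.rnDeriv (μ.map ψ) (ψ x))).map ψ = ν' ∧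
    relEntropy (μ.withDensity (fun x => ν'.rnDeriv (μ.map ψ) (ψ x))) μ
      = relEntropy ν' (μ.map ψ) := by
  have hf : AEMeasurable (ν'.rnDeriv (μ.map ψ)) (μ.map ψ) :=
    (Measure.measurable_rnDeriv _ _).aemeasurable
  have hdensity : (μ.map ψ).withDensity (ν'.rnDeriv (μ.map ψ)) = ν' :=
    Measure.withDensity_rnDeriv_eq _ _ habs
  set ν := μ.withDensity (fun x => ν'.rnDeriv (μ.map ψ) (ψ x))
  have hmap : ν.map ψ = ν' := (map_withDensity_comp hψ hf).trans hdensity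
  have hprob : IsProbabilityMeasure (ν.map ψ) := hmap ▸ inferInstance
  have hentropy : relEntropy ν μ = relEntropy ν' (μ.map ψ) :=
    (relEntropy_withDensity_comp hψ hf).trans (by rw [hdensity])
  exact ⟨Measure.isProbabilityMeasure_of_map ψ, hmap, hentropy⟩

end PullbackDensity

/-- For a Borel map `ψ : E → F` between Polish spaces, a Borel probability
measure `μ` on `E` and a Borel probability measure `ν'` on `F` with `ν' ≪ ψ_*μ` and density
`f = dν'/d(ψ_*μ)`, the measure `ν := (f ∘ ψ) · μ` is a probability measure, it pushes
forward to `ν'`, and `H(ν | μ) = H(ν' | ψ_*μ)`. -/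
theorem pullback_density_probability_map_relEntropy
    {E F : Type*}
    [TopologicalSpace E] [PolishSpace E] [MeasurableSpace E] [BorelSpace E]
    [TopologicalSpace F] [PolishSpace F] [MeasurableSpace F] [BorelSpace F]
    (ψ : E → F) (hψ : Measurable ψ)
    (μ : Measure E) [IsProbabilityMeasure μ]
    (ν' : Measure F) [IsProbabilityMeasure ν']
    (habs : ν' ≪ μ.map ψ) :
    IsProbabilityMeasure (μ.withDensity (fun x => ν'.rnDeriv (μ.map ψ) (ψ x))) ∧
    (μ.withDensity (fun x => ν'.rnDeriv (μ.map ψ) (ψ x))).map ψ = ν' ∧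
    relEntropy (μ.withDensity (fun x => ν'.rnDeriv (μ.map ψ) (ψ x))) μ
      = relEntropy ν' (μ.map ψ) := by
  have : IsProbabilityMeasure (μ.map ψ) := Measure.isProbabilityMeasure_map hψ.aemeasurable
  exact pullback_density_probability_map_relEntropy_general hψ.aemeasurable ν' habs
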